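/- arXiv:math/0502437 — 2 statements merged into one kernel-verified Lean document; each statement's English description precedes it below -/
import Mathlib

section
/- Let n be a natural number and let W be an affine subspace of ℝ^n. Suppose W contains a point all of whose coordinates are nonnegative but contains no point all of whose coordinates are strictly positive. Then for every real number t and every w ∈ W, the scalar multiple t·w does not have all coordinates strictly positive; that is, the set of all scalar multiples of points of W is disjoint from the open positive orthant. -/
/-- First step of Claim 3 of Theorem 3.1: if an affine subspace `W` of `ℝ^n` contains
a nonnegative point but no strictly positive point, then the set of all scalar
multiples of points of `W` misses the open positive orthant. -/
theorem stmt_2 (n : ℕ) (W : AffineSubspace ℝ (Fin n → ℝ))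
    (x₀ : Fin n → ℝ) (hx₀ : x₀ ∈ W) (hx₀nn : ∀ i, 0 ≤ x₀ i)
    (hW : ∀ x ∈ W, ¬ ∀ i, 0 < x i) :
    ∀ (t : ℝ), ∀ w ∈ W, ¬ ∀ i, 0 < (t • w) i := by
  intro t w hw h
  simp only [Pi.smul_apply, smul_eq_mul] at h
  rcases lt_or_ge 0 t with ht | ht
  · exact hW w hw fun i => (mul_pos_iff_of_pos_left ht).1 (h i)
  · refine hW _ (AffineMap.lineMap_mem (2 : ℝ) hw hx₀) fun i => ?_
    have h1 : w i < 0 := by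
      by_contra hc
      have := mul_nonpos_of_nonpos_of_nonneg ht (not_lt.1 hc)
      linarith [h i]
    have h2 := hx₀nn i
    simp only [AffineMap.lineMap_apply, vsub_eq_sub, vadd_eq_add, Pi.add_apply, Pi.smul_apply,
      Pi.sub_apply, smul_eq_mul]
    linarith
end

section
/- Let n ≥ 1 be a natural number and let U be a linear subspace of ℝ^n containing no vector all of whose coordinates are strictly positive. Then there exists a linear subspace V of ℝ^n of dimension n−1 such that U ⊆ V and V contains no vector all of whose coordinates are strictly positive. -/
/-- Hyperplane-extension step of Claim 3 of Theorem 3.1: a linear subspace `U` of `ℝ^n`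
missing the open positive orthant extends to a hyperplane (an `(n-1)`-dimensional
subspace) still missing the open positive orthant. -/
theorem stmt_3 (n : ℕ) (hn : 1 ≤ n) (U : Submodule ℝ (Fin n → ℝ))
    (hU : ∀ x ∈ U, ¬ ∀ i, 0 < x i) :
    ∃ V : Submodule ℝ (Fin n → ℝ),
      Module.finrank ℝ V = n - 1 ∧ U ≤ V ∧ ∀ x ∈ V, ¬ ∀ i, 0 < x i := by
  have hs : {x : Fin n → ℝ | ∀ i, 0 < x i} = Set.pi Set.univ (fun _ => Set.Ioi 0) := by
    ext x; simp
  have hc : Convex ℝ {x : Fin n → ℝ | ∀ i, 0 < x i} := by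
    rw [hs]; exact convex_pi (fun _ _ => convex_Ioi 0)
  have ho : IsOpen {x : Fin n → ℝ | ∀ i, 0 < x i} := by
    rw [hs]; exact isOpen_set_pi Set.finite_univ (fun _ _ => isOpen_Ioi)
  have hd : Disjoint {x : Fin n → ℝ | ∀ i, 0 < x i} (U : Set (Fin n → ℝ)) :=
    Set.disjoint_left.2 fun x hx hxU => hU x hxU hx
  obtain ⟨f, u, h1, h2⟩ := geometric_hahn_banach_open hc ho U.convex hd
  have hu : u ≤ 0 := by simpa using h2 0 U.zero_mem
  have hneg : ∀ x : Fin n → ℝ, (∀ i, 0 < x i) → f x < 0 :=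
    fun x hx => (h1 x hx).trans_le hu
  have hne : (f : (Fin n → ℝ) →ₗ[ℝ] ℝ) ≠ 0 := by
    intro h0
    have h3 := hneg (fun _ => 1) (fun _ => one_pos)
    have h4 : f (fun _ => 1) = 0 := LinearMap.congr_fun h0 (fun _ => 1)
    linarith
  refine ⟨LinearMap.ker (f : (Fin n → ℝ) →ₗ[ℝ] ℝ), ?_, ?_, ?_⟩
  · have := Module.Dual.finrank_ker_add_one_of_ne_zero (f := (f : (Fin n → ℝ) →ₗ[ℝ] ℝ)) hne
    rw [Module.finrank_fin_fun] at this
    omega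
  · intro x hx
    change f x = 0
    by_contra hfx
    have h3 := h2 (((u - 1) / f x) • x) (U.smul_mem _ hx)
    rw [map_smul, smul_eq_mul, div_mul_cancel₀ _ hfx] at h3
    linarith
  · intro x hx hpos
    have h3 : f x = 0 := hx
    have := hneg x hpos
    linarith
end
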